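/- arXiv:1411.6852 — 2 statements merged into one kernel-verified Lean document; each statement's English description precedes it below -/
import Mathlib

section
/- Let G be a finite connected undirected graph with non-negative rational edge weights, let T_s be a shortest path tree of G rooted at s, and let t be a vertex of G. Then, for any edge (u,v) on the tree path from s to t in T_s, with v the endpoint closer to t, and for every vertex z in the subtree T_v of T_s rooted at v, the distance from z to t is unchanged by removing the edge (u,v): d_G(z,t) = d_{G−(u,v)}(z,t). -/
/-- A walk in a graph `E` from `s` to `t`, given as its list of vertices. -/
def IsWalk {V : Type} (E : V → V → Prop) (s t : V) (l : List V) : Prop :=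
  l ≠ [] ∧ l.head? = some s ∧ l.getLast? = some t ∧ l.Chain' E

/-- A simple path from `s` to `t` (no repeated vertices). -/
def IsPath {V : Type} (E : V → V → Prop) (s t : V) (l : List V) : Prop :=
  IsWalk E s t l ∧ l.Nodup

/-- The weight of a path: sum of the weights of its edges. -/
def pathWeight {V : Type} (w : V → V → ℚ) (l : List V) : ℚ :=
  ((l.zip l.tail).map fun p => w p.1 p.2).sum

/-- The distance from `u` to `v`: minimum weight of a path, `⊤` if there is none. -/
noncomputable def dist {V : Type} [Fintype V] [DecidableEq V]
    (E : V → V → Prop) (w : V → V → ℚ) (u v : V) : WithTop ℚ :=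
  (Finset.univ : Finset {l : List V // l.Nodup}).inf fun l =>
    haveI := Classical.propDecidable (IsPath E u v l.1)
    if IsPath E u v l.1 then (pathWeight w l.1 : WithTop ℚ) else ⊤

/-- `G - (u,v)`: delete the (undirected) edge `{u,v}`. -/
def delEdge {V : Type} (E : V → V → Prop) (u v : V) : V → V → Prop :=
  fun a b => E a b ∧ ¬((a = u ∧ b = v) ∨ (a = v ∧ b = u))

/-- The subtree `T_v` of the tree `ET` rooted at `s`: the set of vertices whose tree path
from `s` passes through `v`. -/
def Subtree {V : Type} (ET : V → V → Prop) (s v : V) : Set V :=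
  {x | ∀ l, IsPath ET s x l → v ∈ l}

inductive WW {V : Type} (E : V → V → Prop) (w : V → V → ℚ) : V → V → ℚ → Prop
  | nil (a : V) : WW E w a a 0
  | cons (a b c : V) (r : ℚ) : E a b → WW E w b c r → WW E w a c (w a b + r)

theorem WW.trans {V : Type} {E : V → V → Prop} {w : V → V → ℚ} {a b c : V} {r q : ℚ}
    (h : WW E w a b r) (k : WW E w b c q) : WW E w a c (r + q) := by
  induction h with
  | nil a => simpa using k
  | cons a b c r e _ ih => rw [add_assoc]; exact WW.cons _ _ _ _ e (ih k)

theorem WW.symm {V : Type} {E : V → V → Prop} {w : V → V → ℚ}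
    (hs : Symmetric E) (hws : ∀ a b : V, w a b = w b a) {a b : V} {r : ℚ}
    (h : WW E w a b r) : WW E w b a r := by
  induction h with
  | nil a => exact WW.nil a
  | cons a b c r e _ ih =>
    have h1 := WW.cons b a a 0 (hs e) (WW.nil (w := w) a)
    have := ih.trans h1
    rw [hws a b, add_comm]
    simpa using this

theorem WW.mono {V : Type} {E F : V → V → Prop} {w : V → V → ℚ}
    (hs : ∀ a b, E a b → F a b) {a b : V} {r : ℚ}
    (h : WW E w a b r) : WW F w a b r := by
  induction h with
  | nil a => exact WW.nil a
  | cons a b c r e _ ih => exact WW.cons _ _ _ _ (hs _ _ e) ih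

theorem pw_cons {V : Type} (w : V → V → ℚ) (a b : V) (l : List V) :
    pathWeight w (a :: b :: l) = w a b + pathWeight w (b :: l) := by
  simp [pathWeight]

theorem pw_single {V : Type} (w : V → V → ℚ) (a : V) : pathWeight w [a] = 0 := by
  simp [pathWeight]

theorem pw_append {V : Type} (w : V → V → ℚ) (x : V) (l₁ l₂ : List V) :
    pathWeight w (l₁ ++ x :: l₂) = pathWeight w (l₁ ++ [x]) + pathWeight w (x :: l₂) := by
  induction l₁ with
  | nil => simp [pw_single]
  | cons a l ih =>
    cases l with
    | nil => simp [pw_cons, pw_single]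
    | cons b l =>
      simp only [List.cons_append, pw_cons] at ih ⊢
      rw [ih, add_assoc]

theorem pw_nonneg {V : Type} {E : V → V → Prop} {w : V → V → ℚ}
    (hw : ∀ a b, E a b → 0 ≤ w a b) (l : List V) (h : l.IsChain E) : 0 ≤ pathWeight w l := by
  induction l with
  | nil => simp [pathWeight]
  | cons a l ih =>
    cases l with
    | nil => simp [pw_single]
    | cons b l =>
      rw [List.isChain_cons_cons] at h
      rw [pw_cons]
      exact add_nonneg (hw _ _ h.1) (ih h.2)

theorem IsWalk.ww {V : Type} {E : V → V → Prop} (w : V → V → ℚ) {l : List V} :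
    ∀ {s t : V}, IsWalk E s t l → WW E w s t (pathWeight w l) := by
  induction l with
  | nil => intro s t h; exact absurd rfl h.1
  | cons a l ih =>
    intro s t ⟨_, h2, h3, h4⟩
    cases l with
    | nil =>
      simp at h2 h3
      subst h2; subst h3
      rw [pw_single]; exact WW.nil _
    | cons b l =>
      simp only [List.head?_cons, Option.some.injEq] at h2
      subst h2
      replace h4 := List.isChain_cons_cons.1 h4
      rw [pw_cons]
      refine WW.cons _ _ _ _ h4.1 (ih ⟨by simp, by simp, ?_, h4.2⟩)
      rw [← h3]; simp

theorem IsWalk.split {V : Type} {E : V → V → Prop} {s t x : V} {l₁ l₂ : List V}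
    (h : IsWalk E s t (l₁ ++ x :: l₂)) :
    IsWalk E s x (l₁ ++ [x]) ∧ IsWalk E x t (x :: l₂) := by
  obtain ⟨h1, h2, h3, h4⟩ := h
  have h5 := List.isChain_split.1 h4
  refine ⟨⟨by simp, ?_, by simp, h5.1⟩, by simp, by simp, ?_, h5.2⟩
  · rw [← h2]; cases l₁ <;> simp
  · rw [← h3, List.getLast?_append_of_ne_nil _ (by simp)]

theorem WW.path {V : Type} {E : V → V → Prop} {w : V → V → ℚ}
    (hw : ∀ a b, E a b → 0 ≤ w a b) {a b : V} {r : ℚ}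
    (h : WW E w a b r) : ∃ l, IsPath E a b l ∧ pathWeight w l ≤ r := by
  induction h with
  | nil a => exact ⟨[a], ⟨⟨by simp, by simp, by simp, List.isChain_singleton a⟩, by simp⟩, by simp [pw_single]⟩
  | cons a b c r e _ ih =>
    obtain ⟨l, hl, hr⟩ := ih
    by_cases ha : a ∈ l
    · obtain ⟨m, n, rfl⟩ := List.append_of_mem ha
      obtain ⟨h1, h2⟩ := hl.1.split
      refine ⟨a :: n, ⟨h2, (List.nodup_append.1 hl.2).2.1⟩, ?_⟩
      rw [pw_append] at hr
      have := pw_nonneg hw _ h1.2.2.2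
      have := hw _ _ e
      linarith
    · obtain ⟨⟨h1, h2, h3, h4⟩, h5⟩ := hl
      cases l with
      | nil => exact absurd rfl h1
      | cons d l =>
        simp only [List.head?_cons, Option.some.injEq] at h2
        subst h2
        refine ⟨a :: d :: l, ⟨⟨by simp, by simp, ?_, List.isChain_cons_cons.2 ⟨e, h4⟩⟩,
          List.nodup_cons.2 ⟨ha, h5⟩⟩, ?_⟩
        · rw [← h3]; simp
        · rw [pw_cons]; linarith

theorem dist_le_ww {V : Type} [Fintype V] [DecidableEq V] {E : V → V → Prop} {w : V → V → ℚ}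
    (hw : ∀ a b, E a b → 0 ≤ w a b) {a b : V} {r : ℚ}
    (h : WW E w a b r) : dist E w a b ≤ (r : WithTop ℚ) := by
  obtain ⟨l, hl, hr⟩ := h.path hw
  refine le_trans (Finset.inf_le (Finset.mem_univ ⟨l, hl.2⟩)) ?_
  simp only [hl, if_true]
  exact_mod_cast hr

theorem le_dist_of {V : Type} [Fintype V] [DecidableEq V] {E : V → V → Prop} {w : V → V → ℚ}
    {a b : V} {c : WithTop ℚ}
    (h : ∀ l, IsPath E a b l → c ≤ (pathWeight w l : WithTop ℚ)) : c ≤ dist E w a b := by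
  refine Finset.le_inf ?_
  rintro ⟨l, hl⟩ -
  dsimp only
  split_ifs with h1
  · exact h l h1
  · exact le_top

theorem chain_del {V : Type} {E : V → V → Prop} {u v : V} (l : List V) (h : l.IsChain E)
    (hn : u ∉ l ∨ v ∉ l) : l.IsChain (delEdge E u v) := by
  induction l with
  | nil => exact List.isChain_nil
  | cons a l ih =>
    cases l with
    | nil => exact List.isChain_singleton a
    | cons b l =>
      rw [List.isChain_cons_cons] at h ⊢
      refine ⟨⟨h.1, ?_⟩, ih h.2 ?_⟩
      · simp only [List.mem_cons] at hn
        grind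
      · simp only [List.mem_cons] at hn ⊢
        grind

theorem chain_cases {V : Type} {E : V → V → Prop} (u v : V) (l : List V) (h : l.IsChain E) :
    l.IsChain (delEdge E u v) ∨ ∃ a b, l = a ++ u :: v :: b ∨ l = a ++ v :: u :: b := by
  induction l with
  | nil => exact Or.inl List.isChain_nil
  | cons a l ih =>
    cases l with
    | nil => exact Or.inl (List.isChain_singleton a)
    | cons b l =>
      rw [List.isChain_cons_cons] at h ⊢
      rcases ih h.2 with h1 | ⟨m, n, h1⟩
      · by_cases hc : (a = u ∧ b = v) ∨ (a = v ∧ b = u)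
        · right
          refine ⟨[], l, ?_⟩
          rcases hc with ⟨rfl, rfl⟩ | ⟨rfl, rfl⟩ <;> simp
        · exact Or.inl ⟨⟨h.1, hc⟩, h1⟩
      · right
        refine ⟨a :: m, n, ?_⟩
        rcases h1 with h1 | h1 <;> simp [h1]

theorem IsWalk.del {V : Type} {E : V → V → Prop} {u v s t : V} {l : List V} (h : IsWalk E s t l)
    (hn : u ∉ l ∨ v ∉ l) : IsWalk (delEdge E u v) s t l :=
  ⟨h.1, h.2.1, h.2.2.1, chain_del l h.2.2.2 hn⟩

theorem IsWalk.mono {V : Type} {E F : V → V → Prop} {s t : V} {l : List V} (h : IsWalk E s t l)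
    (hn : ∀ a b, E a b → F a b) : IsWalk F s t l :=
  ⟨h.1, h.2.1, h.2.2.1, List.IsChain.imp hn h.2.2.2⟩

theorem subtree_key {V : Type} [Fintype V] [DecidableEq V]
    (E : V → V → Prop) (w : V → V → ℚ)
    (hw : ∀ a b, E a b → 0 ≤ w a b)
    (s t : V) (ET : V → V → Prop)
    (hTsub : ∀ a b, ET a b → E a b)
    (hTtree : ∀ x : V, ∃! l, IsPath ET s x l)
    (hTshort : ∀ (x : V) (l : List V), IsPath ET s x l →
      (pathWeight w l : WithTop ℚ) = dist E w s x)
    (u v : V) (l₁ l₂ : List V)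
    (hptree : IsPath ET s t (l₁ ++ u :: v :: l₂)) (x : V) (hx : x ∈ Subtree ET s v) :
    ∃ q, WW (delEdge E u v) w v x q ∧ ∀ r, WW E w u x r → w u v + q ≤ r := by
  obtain ⟨p, hp, -⟩ := hTtree x
  obtain ⟨m, n, rfl⟩ := List.append_of_mem (hx p hp)
  have e1 : l₁ ++ u :: v :: l₂ = (l₁ ++ [u]) ++ v :: l₂ := by simp
  rw [e1] at hptree
  have h1 : IsPath ET s v ((l₁ ++ [u]) ++ [v]) := by
    refine ⟨hptree.1.split.1, hptree.2.sublist ?_⟩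
    exact List.Sublist.append_left (by simp) _
  have h2 : IsPath ET s v (m ++ [v]) := by
    refine ⟨hp.1.split.1, hp.2.sublist ?_⟩
    exact List.Sublist.append_left (by simp) _
  have h3 := (hTtree v).unique h2 h1
  obtain rfl : m = l₁ ++ [u] := List.append_cancel_right h3
  have hu : u ∉ v :: n := by
    intro hmem
    exact (List.nodup_append.1 hp.2).2.2 u (by simp) u hmem rfl
  refine ⟨pathWeight w (v :: n), ((hp.1.split.2.mono hTsub).del (Or.inl hu)).ww w, ?_⟩
  intro r hr
  have h4 := hTshort x _ hp
  have e2 : (l₁ ++ [u]) ++ v :: n = l₁ ++ u :: v :: n := by simp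
  rw [e2] at hp h4
  have h5 := dist_le_ww hw (((hp.1.split.1.mono hTsub).ww w).trans hr)
  rw [← h4, pw_append, pw_cons] at h5
  have h6 : pathWeight w (l₁ ++ [u]) + (w u v + pathWeight w (v :: n)) ≤
    pathWeight w (l₁ ++ [u]) + r := by exact_mod_cast h5
  linarith

/-- If `T_s` (given by the symmetric edge relation `ET`) is a shortest path tree of the finite
connected undirected graph `G = (E, w)` rooted at `s`, and `(u,v)` is an edge of the tree path
from `s` to `t` with `v` the endpoint closer to `t`, then for every vertex `z` of the subtree
`T_v`, the distance from `z` to `t` is unchanged by removing `(u,v)`: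
`d_G(z,t) = d_{G-(u,v)}(z,t)`. -/
theorem dist_toward_t_eq_of_delEdge {V : Type} [Fintype V] [DecidableEq V]
    (E : V → V → Prop) (w : V → V → ℚ)
    (hsymm : Symmetric E) (hwsymm : ∀ a b : V, w a b = w b a)
    (hw : ∀ a b, E a b → 0 ≤ w a b)
    (hconn : ∀ a b : V, ∃ l, IsPath E a b l)
    (s t : V) (ET : V → V → Prop)
    (hTsub : ∀ a b, ET a b → E a b) (hTsymm : Symmetric ET)
    (hTtree : ∀ x : V, ∃! l, IsPath ET s x l)
    (hTshort : ∀ (x : V) (l : List V), IsPath ET s x l →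
      (pathWeight w l : WithTop ℚ) = dist E w s x)
    (u v : V) (ptree l₁ l₂ : List V)
    (hptree : IsPath ET s t ptree) (hsplit : ptree = l₁ ++ u :: v :: l₂) :
    ∀ z ∈ Subtree ET s v, dist E w z t = dist (delEdge E u v) w z t := by
  subst hsplit
  intro z hz
  have hsymm' : Symmetric (delEdge E u v) := by
    rintro a b ⟨h1, h2⟩
    exact ⟨hsymm h1, by tauto⟩
  have hw' : ∀ a b, delEdge E u v a b → 0 ≤ w a b := fun a b h => hw a b h.1
  have huv : E u v := hTsub _ _ (List.isChain_cons_cons.1 (hptree.1.split.2.2.2.2)).1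
  have hwuv := hw _ _ huv
  have ht : t ∈ Subtree ET s v := by
    intro l hl
    rw [(hTtree t).unique hl hptree]; simp
  obtain ⟨qz, hz1, hz2⟩ := subtree_key E w hw s t ET hTsub hTtree hTshort u v l₁ l₂ hptree z hz
  obtain ⟨qt, ht1, ht2⟩ := subtree_key E w hw s t ET hTsub hTtree hTshort u v l₁ l₂ hptree t ht
  apply le_antisymm
  · refine le_dist_of fun l hl => dist_le_ww hw ((hl.1.mono fun a b h => h.1).ww w)
  · refine le_dist_of fun l hl => ?_
    suffices h : ∃ r, WW (delEdge E u v) w z t r ∧ r ≤ pathWeight w l by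
      obtain ⟨r, h1, h2⟩ := h
      exact (dist_le_ww hw' h1).trans (by exact_mod_cast h2)
    obtain ⟨hl, hnd⟩ := hl
    rcases chain_cases u v l hl.2.2.2 with h | ⟨a, b, rfl | rfl⟩
    · exact ⟨_, IsWalk.ww w ⟨hl.1, hl.2.1, hl.2.2.1, h⟩, le_rfl⟩
    · have h1 := hl.split.1
      have h2 : IsWalk E v t (v :: b) := (IsWalk.split (l₁ := [u]) hl.split.2).2
      have hu : u ∉ v :: b := (List.nodup_cons.1 (List.nodup_append.1 hnd).2.1).1
      refine ⟨_, (hz1.symm hsymm' hwsymm).trans ((h2.del (Or.inl hu)).ww w), ?_⟩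
      have := hz2 _ ((h1.ww w).symm hsymm hwsymm)
      rw [pw_append, pw_cons]
      linarith
    · have h1 := hl.split.1
      have h2 : IsWalk E u t (u :: b) := (IsWalk.split (l₁ := [v]) hl.split.2).2
      have hu : u ∉ a ++ [v] := by
        have e : a ++ v :: u :: b = (a ++ [v]) ++ u :: b := by simp
        rw [e] at hnd
        intro hmem
        exact (List.nodup_append.1 hnd).2.2 u hmem u (by simp) rfl
      refine ⟨_, ((h1.del (Or.inl hu)).ww w).trans ht1, ?_⟩
      have := ht2 _ (h2.ww w)
      rw [pw_append w v a (u :: b), pw_cons, hwsymm v u]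
      linarith
end

section
/- Let G be a finite connected undirected graph with non-negative rational edge weights, let s, t, α be such that P_α(s,t,G) ≠ ∅, let π_{su} be a common prefix of P_α(s,t,G) ending at a vertex u ≠ t, and let e = {u,v} be an edge of G incident to u. Then the extended path π_{su}·(u,v) is a common prefix of P_α(s,t,G) if and only if the shortest st-path in G − e has weight greater than α, i.e., d_{G−e}(s,t) > α. -/
/-- `Pset E w α s t` is the set `P_α(s,t,G)` of `α`-bounded simple `st`-paths. -/
def Pset {V : Type} (E : V → V → Prop) (w : V → V → ℚ) (α : ℚ) (s t : V) : Set (List V) :=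
  {l | IsPath E s t l ∧ pathWeight w l ≤ α}

/-- Let `G = (E,w)` be a finite connected undirected graph with non-negative weights, with
`P_α(s,t,G) ≠ ∅`, let `π_su` be a common prefix of `P_α(s,t,G)` ending at `u ≠ t`, and let
`e = {u,v}` be an edge of `G` incident to `u` (with `v` not on `π_su`, so that the extension is
a path).  Then the extended path `π_su·(u,v)` is a common prefix of `P_α(s,t,G)` if and only if
`d_{G-e}(s,t) > α`. -/
theorem extend_prefix_iff_dist_gt {V : Type} [Fintype V] [DecidableEq V]
    (E : V → V → Prop) (w : V → V → ℚ)
    (hsymm : Symmetric E) (hwsymm : ∀ a b : V, w a b = w b a)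
    (hw : ∀ a b, E a b → 0 ≤ w a b)
    (hconn : ∀ a b : V, ∃ l, IsPath E a b l)
    (s t : V) (α : ℚ)
    (hne : (Pset E w α s t).Nonempty)
    (πsu : List V) (u v : V)
    (hcp : ∀ σ ∈ Pset E w α s t, πsu <+: σ)
    (hu : πsu.getLast? = some u) (hut : u ≠ t)
    (he : E u v) (hvnot : v ∉ πsu) :
    (∀ σ ∈ Pset E w α s t, (πsu ++ [v]) <+: σ) ↔ (α : WithTop ℚ) < dist (delEdge E u v) w s t := by
  have _ := hsymm
  have key : (α : WithTop ℚ) < dist (delEdge E u v) w s t ↔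
      ∀ l, IsPath (delEdge E u v) s t l → α < pathWeight w l := by
    unfold _root_.dist
    rw [Finset.lt_inf_iff (WithTop.coe_lt_top α)]
    constructor
    · intro h l hl
      have := h ⟨l, hl.2⟩ (Finset.mem_univ _)
      simp only [if_pos hl] at this
      exact WithTop.coe_lt_coe.1 this
    · intro h l _
      by_cases hl : IsPath (delEdge E u v) s t l.1
      · simp only [if_pos hl]
        exact WithTop.coe_lt_coe.2 (h _ hl)
      · simp only [if_neg hl]
        exact WithTop.coe_lt_top α
  rw [key]
  obtain ⟨p, rfl⟩ : ∃ p, πsu = p ++ [u] := by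
    rw [List.getLast?_eq_some_iff] at hu
    exact hu
  constructor
  · intro h l hl
    by_contra hlt
    have hP : l ∈ Pset E w α s t := by
      refine ⟨⟨⟨hl.1.1, hl.1.2.1, hl.1.2.2.1, ?_⟩, hl.2⟩, not_lt.1 hlt⟩
      exact List.IsChain.imp (fun a b hab => hab.1) hl.1.2.2.2
    obtain ⟨r, hr⟩ := h l hP
    have hc : List.IsChain (delEdge E u v) l := hl.1.2.2.2
    rw [← hr, List.isChain_iff_getElem] at hc
    have := hc p.length (by simp)
    simp [delEdge] at this
  · intro h σ hσ
    obtain ⟨r, hr⟩ := hcp σ hσ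
    cases r with
    | nil =>
      have := hσ.1.1.2.2.1
      rw [← hr] at this
      simp at this
      exact absurd this hut
    | cons x r =>
      by_cases hx : x = v
      · subst hx
        exact ⟨r, by rw [← hr]; simp⟩
      · exfalso
        refine absurd hσ.2 (not_le.2 (h σ ⟨⟨hσ.1.1.1, hσ.1.1.2.1, hσ.1.1.2.2.1, ?_⟩, hσ.1.2⟩))
        have hc : List.IsChain E σ := hσ.1.1.2.2.2
        have hnd := hσ.1.2
        change List.IsChain _ σ
        rw [List.isChain_iff_getElem] at hc ⊢
        have hlen : p.length + 1 < σ.length := by rw [← hr]; simp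
        have hpu : σ[p.length] = u := by simp [← hr]
        have hpx : σ[p.length + 1] = x := by simp [← hr]
        intro i hi
        refine ⟨hc i hi, ?_⟩
        rintro (⟨h1, h2⟩ | ⟨h1, h2⟩)
        · have : i = p.length := (hnd.getElem_inj_iff).1 (h1.trans hpu.symm)
          subst this
          exact hx (hpx.symm.trans h2)
        · have : i + 1 = p.length := (hnd.getElem_inj_iff).1 (h2.trans hpu.symm)
          apply hvnot
          have hip : i < p.length := by omega
          have : σ[i] = p[i] := by
            simp [← hr, List.getElem_append_left, hip]
          rw [← h1, this]
          simp
end
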